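/- Let V be a simple Euclidean Jordan algebra of rank r ≥ 3 with cone of squares Q. Then there is no hyperplane H through the origin in V such that the orthogonal projection P_H maps Q into Q. Equivalently, V contains no lattice-like hyperplane. -/

import Mathlib

open scoped RealInnerProductSpace

/-- A Euclidean Jordan algebra structure on a real inner product space `V`:
a commutative bilinear product satisfying the Jordan identity, for which the
inner product is associative, together with a unit element. -/
structure EJA (V : Type*) [NormedAddCommGroup V] [InnerProductSpace ℝ V] where
  mul : V →ₗ[ℝ] V →ₗ[ℝ] V
  comm : ∀ x y : V, mul x y = mul y x
  jordan : ∀ x y : V, mul x (mul (mul x x) y) = mul (mul x x) (mul x y)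
  assoc_inner : ∀ x y z : V, ⟪mul x y, z⟫ = ⟪y, mul x z⟫
  one : V
  one_mul : ∀ x : V, mul one x = x

variable {V : Type*} [NormedAddCommGroup V] [InnerProductSpace ℝ V]

/-- The cone of squares of a Euclidean Jordan algebra. -/
def EJA.coneOfSquares (J : EJA V) : Set V := {x | ∃ y, x = J.mul y y}

/-- An idempotent element. -/
def EJA.IsIdem (J : EJA V) (c : V) : Prop := J.mul c c = c

/-- A primitive idempotent: a nonzero idempotent which is not the sum of two
nonzero orthogonal idempotents. -/
def EJA.IsPrimitiveIdem (J : EJA V) (c : V) : Prop :=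
  J.IsIdem c ∧ c ≠ 0 ∧
    ∀ u v : V, J.IsIdem u → J.IsIdem v → J.mul u v = 0 → c = u + v → u = 0 ∨ v = 0

/-- A Jordan frame: a complete system of mutually orthogonal primitive
idempotents summing to the unit. -/
def EJA.IsJordanFrame (J : EJA V) {r : ℕ} (c : Fin r → V) : Prop :=
  (∀ i, J.IsPrimitiveIdem (c i)) ∧
    (∀ i j, i ≠ j → J.mul (c i) (c j) = 0) ∧ (∑ i, c i) = J.one

/-- An ideal of a Euclidean Jordan algebra. -/
def EJA.IsIdeal (J : EJA V) (I : Submodule ℝ V) : Prop :=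
  ∀ x ∈ I, ∀ y : V, J.mul x y ∈ I

/-- A simple Euclidean Jordan algebra: nontrivial and with no nontrivial ideal. -/
def EJA.IsSimple (J : EJA V) : Prop :=
  (⊤ : Submodule ℝ V) ≠ ⊥ ∧ ∀ I : Submodule ℝ V, J.IsIdeal I → I = ⊥ ∨ I = ⊤

namespace EJA

/-- The Jordan identity linearized in one of its repeated variables. -/
theorem jordan_linearized (J : EJA V) (x y z : V) :
    J.mul z (J.mul (J.mul x x) y) + (2 : ℝ) • J.mul x (J.mul (J.mul x z) y) =
      J.mul (J.mul x x) (J.mul z y) + (2 : ℝ) • J.mul (J.mul x z) (J.mul x y) := by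
  have h1 := J.jordan (x + z) y
  have h2 := J.jordan (x - z) y
  have h3 := J.jordan z y
  simp only [map_add, map_sub, LinearMap.add_apply, LinearMap.sub_apply, J.comm z x] at h1 h2
  linear_combination (norm := module) (1 / 2 : ℝ) • h1 - (1 / 2 : ℝ) • h2 - h3

section Peirce

variable (J : EJA V) {e : V}

theorem peirce_cubic (he : J.IsIdem e) (x : V) :
    (2 : ℝ) • J.mul e (J.mul e (J.mul e x)) + J.mul e x =
      (3 : ℝ) • J.mul e (J.mul e x) := by
  have h := J.jordan_linearized e e x
  simp only [show J.mul e e = e from he, J.comm x e, J.comm (J.mul e x) e] at h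
  linear_combination (norm := module) h

theorem inner_mul_idem_nonneg (he : J.IsIdem e) (x : V) : 0 ≤ ⟪J.mul e x, x⟫ := by
  have hc := J.peirce_cubic he x
  have hc2 := J.peirce_cubic he (J.mul e x)
  have key : J.mul e x = J.mul e (J.mul e x) + (4 : ℝ) • (J.mul e (J.mul e x)
      - (2 : ℝ) • J.mul e (J.mul e (J.mul e x)) + J.mul e (J.mul e (J.mul e (J.mul e x)))) := by
    linear_combination (norm := module) (1 : ℝ) • hc - (2 : ℝ) • hc2
  have h1 : ⟪J.mul e (J.mul e x), x⟫ = ‖J.mul e x‖ ^ 2 := by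
    rw [J.assoc_inner, real_inner_self_eq_norm_sq]
  have h2 : ⟪J.mul e (J.mul e x) - (2 : ℝ) • J.mul e (J.mul e (J.mul e x))
      + J.mul e (J.mul e (J.mul e (J.mul e x))), x⟫ = ‖J.mul e x - J.mul e (J.mul e x)‖ ^ 2 := by
    rw [← real_inner_self_eq_norm_sq]
    simp only [inner_add_left, inner_sub_left, inner_sub_right, inner_smul_left, J.assoc_inner]
    simp
    ring
  rw [key, inner_add_left, inner_smul_left, h1, h2]
  simp
  positivity

/-- Elements of the Peirce spaces for the eigenvalues `0` and `1` operator-commute with the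
idempotent. -/
theorem idem_mul_comm_of_even (he : J.IsIdem e) {x : V} (hx : J.mul e (J.mul e x) = J.mul e x)
    (y : V) : J.mul e (J.mul x y) = J.mul x (J.mul e y) := by
  have h1 := J.jordan_linearized e y x
  have h2 := J.jordan_linearized e y (J.mul e x)
  simp only [show J.mul e e = e from he, hx] at h1 h2
  linear_combination (norm := module) (2 : ℝ) • h2 - h1

theorem even_mul_even (he : J.IsIdem e) {x y : V} (hx : J.mul e (J.mul e x) = J.mul e x)
    (hy : J.mul e (J.mul e y) = J.mul e y) :
    J.mul e (J.mul e (J.mul x y)) = J.mul e (J.mul x y) := by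
  rw [J.idem_mul_comm_of_even he hx, J.idem_mul_comm_of_even he hx, hy]

theorem even_mul_half (he : J.IsIdem e) {x y : V} (hx : J.mul e (J.mul e x) = J.mul e x)
    (hy : J.mul e y = (1 / 2 : ℝ) • y) :
    J.mul e (J.mul x y) = (1 / 2 : ℝ) • J.mul x y := by
  rw [J.idem_mul_comm_of_even he hx, hy, map_smul]

theorem half_sq_even (he : J.IsIdem e) {x : V} (hx : J.mul e x = (1 / 2 : ℝ) • x) :
    J.mul e (J.mul e (J.mul x x)) = J.mul e (J.mul x x) := by
  have h := J.jordan_linearized x e e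
  simp only [show J.mul e e = e from he, J.comm x e, hx, map_smul, LinearMap.smul_apply,
    J.comm (J.mul x x) e] at h
  linear_combination (norm := module) h

theorem half_mul_half (he : J.IsIdem e) {x y : V} (hx : J.mul e x = (1 / 2 : ℝ) • x)
    (hy : J.mul e y = (1 / 2 : ℝ) • y) :
    J.mul e (J.mul e (J.mul x y)) = J.mul e (J.mul x y) := by
  have h1 := J.half_sq_even he hx
  have h2 := J.half_sq_even he hy
  have h3 := J.half_sq_even he (x := x + y) (by rw [map_add, hx, hy, smul_add])
  simp only [map_add, LinearMap.add_apply, J.comm y x] at h3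
  linear_combination (norm := module) (1 / 2 : ℝ) • (h3 - h1 - h2)

/-- The product of the Peirce spaces for the eigenvalues `1` and `0` vanishes. -/
theorem one_mul_zero (he : J.IsIdem e) {x y : V} (hx : J.mul e x = x) (hy : J.mul e y = 0) :
    J.mul x y = 0 := by
  have h1 := J.idem_mul_comm_of_even he (x := x) (by rw [hx, hx]) y
  have h2 := J.idem_mul_comm_of_even he (x := y) (by rw [hy, map_zero]) x
  rw [hy, map_zero] at h1
  rw [J.comm y x, hx, J.comm y x, h1] at h2
  exact h2.symm

/-- The component of an element in the Peirce space for the eigenvalue `1 / 2`. -/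
def halfPart (e : V) : V →ₗ[ℝ] V := (4 : ℝ) • (J.mul e - J.mul e ∘ₗ J.mul e)

theorem halfPart_apply (e x : V) :
    J.halfPart e x = (4 : ℝ) • (J.mul e x - J.mul e (J.mul e x)) := rfl

theorem mul_halfPart (he : J.IsIdem e) (x : V) :
    J.mul e (J.halfPart e x) = (1 / 2 : ℝ) • J.halfPart e x := by
  have h := J.peirce_cubic he x
  simp only [halfPart_apply, map_smul, map_sub]
  linear_combination (norm := module) (-2 : ℝ) • h

theorem sub_halfPart_even (he : J.IsIdem e) (x : V) :
    J.mul e (J.mul e (x - J.halfPart e x)) = J.mul e (x - J.halfPart e x) := by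
  simp only [map_sub, J.mul_halfPart he, map_smul]
  rw [halfPart_apply]
  module

theorem halfPart_of_even {x : V} (hx : J.mul e (J.mul e x) = J.mul e x) :
    J.halfPart e x = 0 := by
  rw [halfPart_apply, hx, sub_self, smul_zero]

theorem halfPart_of_half {x : V} (hx : J.mul e x = (1 / 2 : ℝ) • x) :
    J.halfPart e x = x := by
  rw [halfPart_apply, hx, map_smul, hx]
  module

/-- The Peirce reflection of an idempotent: `-1` on the Peirce space for the eigenvalue `1 / 2`
and `1` on the two others. -/
def peirceReflection (e : V) : V →ₗ[ℝ] V := LinearMap.id - (2 : ℝ) • J.halfPart e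

theorem peirceReflection_apply (e x : V) :
    J.peirceReflection e x = x - (2 : ℝ) • J.halfPart e x := rfl

theorem peirceReflection_involutive (he : J.IsIdem e) (x : V) :
    J.peirceReflection e (J.peirceReflection e x) = x := by
  have h := J.halfPart_of_half (J.mul_halfPart he x)
  simp only [peirceReflection_apply, map_sub, map_smul, h]
  module

theorem peirceReflection_mul (he : J.IsIdem e) (x y : V) :
    J.peirceReflection e (J.mul x y) =
      J.mul (J.peirceReflection e x) (J.peirceReflection e y) := by
  have split : ∀ z : V, ∃ g h : V, z = g + h ∧ J.mul e (J.mul e g) = J.mul e g ∧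
      J.mul e h = (1 / 2 : ℝ) • h := fun z =>
    ⟨z - J.halfPart e z, J.halfPart e z, by abel, J.sub_halfPart_even he z, J.mul_halfPart he z⟩
  obtain ⟨g, h, rfl, hg, hh⟩ := split x
  obtain ⟨g', h', rfl, hg', hh'⟩ := split y
  have e1 := J.halfPart_of_even (J.even_mul_even he hg hg')
  have e2 := J.halfPart_of_half (J.even_mul_half he hg hh')
  have e3 := J.halfPart_of_half (J.even_mul_half he hg' hh)
  rw [J.comm g' h] at e3
  have e4 := J.halfPart_of_even (J.half_mul_half he hh hh')
  simp only [peirceReflection_apply, map_add, LinearMap.add_apply, e1, e2, e3, e4,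
    J.halfPart_of_even hg, J.halfPart_of_even hg', J.halfPart_of_half hh, J.halfPart_of_half hh',
    map_sub, LinearMap.sub_apply, map_smul, LinearMap.smul_apply, map_zero, LinearMap.zero_apply]
  module

theorem mul_unit (x : V) : J.mul x J.one = x := by
  rw [J.comm, J.one_mul]

theorem IsPrimitiveIdem.peirceReflection {J : EJA V} (he : J.IsIdem e) {c : V}
    (hc : J.IsPrimitiveIdem c) : J.IsPrimitiveIdem (J.peirceReflection e c) := by
  obtain ⟨h1, h2, h3⟩ := hc
  have inj : ∀ x, J.peirceReflection e x = 0 → x = 0 := fun x hx => by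
    rw [← J.peirceReflection_involutive he x, hx, map_zero]
  refine ⟨?_, fun h => h2 (inj c h), fun u v hu hv huv hcuv => ?_⟩
  · rw [EJA.IsIdem, ← J.peirceReflection_mul he, show J.mul c c = c from h1]
  · have := h3 (J.peirceReflection e u) (J.peirceReflection e v)
      (by rw [EJA.IsIdem, ← J.peirceReflection_mul he, show J.mul u u = u from hu])
      (by rw [EJA.IsIdem, ← J.peirceReflection_mul he, show J.mul v v = v from hv])
      (by rw [← J.peirceReflection_mul he, huv, map_zero])
      (by rw [← map_add, ← hcuv, J.peirceReflection_involutive he])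
    exact this.imp (inj u) (inj v)

theorem IsJordanFrame.peirceReflection {J : EJA V} (he : J.IsIdem e) {r : ℕ} {c : Fin r → V}
    (hc : J.IsJordanFrame c) : J.IsJordanFrame (fun i => J.peirceReflection e (c i)) := by
  obtain ⟨h1, h2, h3⟩ := hc
  refine ⟨fun i => (h1 i).peirceReflection he, fun i j hij => ?_, ?_⟩
  · rw [← J.peirceReflection_mul he, h2 i j hij, map_zero]
  · rw [← map_sum, h3, peirceReflection_apply, halfPart_apply, J.mul_unit,
      show J.mul e e = e from he]
    module

end Peirce

section Primitive

variable (J : EJA V)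

theorem inner_mul_self (x y : V) : ⟪J.mul x x, y⟫ = ⟪x, J.mul x y⟫ := J.assoc_inner x x y

theorem inner_mul_comm (x y z : V) : ⟪J.mul x y, z⟫ = ⟪x, J.mul y z⟫ := by
  rw [J.comm, J.assoc_inner]

/-- The cubic form `⟪x², x⟫` has a critical point on the unit sphere of a nonzero subspace. -/
theorem exists_cubic_critical [FiniteDimensional ℝ V] (W : Submodule ℝ V) (hW : W ≠ ⊥) :
    ∃ x ∈ W, ‖x‖ = 1 ∧ ∀ h ∈ W, ⟪x, h⟫ = 0 → ⟪J.mul x x, h⟫ = 0 := by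
  have hcont : Continuous fun x : V => ⟪J.mul x x, x⟫ := by
    have h1 : Continuous fun x : V => J.mul x x := by
      have : Continuous fun p : V × V => J.mul p.1 p.2 :=
        (LinearMap.toContinuousBilinearMap J.mul).continuous₂
      exact this.comp (continuous_id.prodMk continuous_id)
    exact h1.inner continuous_id
  have hcompact : IsCompact (Metric.sphere (0 : V) 1 ∩ W) :=
    (isCompact_sphere 0 1).inter_right W.closed_of_finiteDimensional
  have hne : (Metric.sphere (0 : V) 1 ∩ W).Nonempty := by
    obtain ⟨w, hw, hw0⟩ := W.exists_mem_ne_zero_of_ne_bot hW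
    refine ⟨‖w‖⁻¹ • w, ?_, W.smul_mem _ hw⟩
    simp [norm_smul, hw0]
  obtain ⟨x, ⟨hx1, hxW⟩, hmax⟩ := hcompact.exists_isMaxOn hne hcont.continuousOn
  have hx1 : ‖x‖ = 1 := by simpa using hx1
  refine ⟨x, hxW, hx1, fun h hh hxh => ?_⟩
  by_cases h0 : h = 0
  · simp [h0]
  set k : V := ‖h‖⁻¹ • h with hk
  have hk1 : ‖k‖ = 1 := by simp [hk, norm_smul, h0]
  have hkW : k ∈ W := W.smul_mem _ hh
  have hxk : ⟪x, k⟫ = 0 := by rw [hk, inner_smul_right, hxh, mul_zero]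
  suffices hs : ⟪J.mul x x, k⟫ = 0 by
    rw [hk, inner_smul_right] at hs
    exact (mul_eq_zero.mp hs).resolve_left (by simpa using h0)
  set A := ⟪J.mul x x, x⟫ with hA
  set B := ⟪J.mul x x, k⟫ with hB
  set C := ⟪J.mul k k, x⟫ with hC
  set D := ⟪J.mul k k, k⟫ with hD
  have hB' : ⟪J.mul x k, x⟫ = B := by rw [J.assoc_inner, real_inner_comm]
  have hC' : ⟪J.mul x k, k⟫ = C := by rw [J.comm, J.assoc_inner, real_inner_comm]
  have hexp : ∀ t : ℝ, ⟪J.mul (Real.cos t • x + Real.sin t • k) (Real.cos t • x + Real.sin t • k),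
      Real.cos t • x + Real.sin t • k⟫ = Real.cos t ^ 3 * A + 3 * (Real.cos t ^ 2 * Real.sin t) * B
        + 3 * (Real.cos t * Real.sin t ^ 2) * C + Real.sin t ^ 3 * D := by
    intro t
    simp only [map_add, map_smul, LinearMap.add_apply, LinearMap.smul_apply, inner_add_left,
      inner_add_right, real_inner_smul_left, real_inner_smul_right, J.comm k x, hB', hC', ← hA,
      ← hB, ← hC, ← hD]
    ring
  have hderiv : HasDerivAt (fun t : ℝ => Real.cos t ^ 3 * A
      + 3 * (Real.cos t ^ 2 * Real.sin t) * B
      + 3 * (Real.cos t * Real.sin t ^ 2) * C + Real.sin t ^ 3 * D) (3 * B) 0 := by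
    have hc := Real.hasDerivAt_cos 0
    have hs := Real.hasDerivAt_sin 0
    have := ((((hc.pow 3).mul_const A).add ((((hc.pow 2).mul hs).const_mul 3).mul_const B)).add
      (((hc.mul (hs.pow 2)).const_mul 3).mul_const C)).add ((hs.pow 3).mul_const D)
    exact this.congr_deriv (by simp)
  have hloc : IsLocalMax (fun t : ℝ => Real.cos t ^ 3 * A
      + 3 * (Real.cos t ^ 2 * Real.sin t) * B
      + 3 * (Real.cos t * Real.sin t ^ 2) * C + Real.sin t ^ 3 * D) 0 := by
    refine Filter.Eventually.of_forall fun t => ?_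
    have hmem : Real.cos t • x + Real.sin t • k ∈ Metric.sphere (0 : V) 1 ∩ W := by
      refine ⟨?_, W.add_mem (W.smul_mem _ hxW) (W.smul_mem _ hkW)⟩
      have : ‖Real.cos t • x + Real.sin t • k‖ ^ 2 = 1 := by
        rw [norm_add_sq_real, real_inner_smul_left, real_inner_smul_right, hxk, norm_smul,
          norm_smul, hx1, hk1]
        simp
      rw [mem_sphere_zero_iff_norm]
      exact (sq_eq_sq₀ (norm_nonneg _) zero_le_one).mp (by rw [this, one_pow])
    have hle : ⟪J.mul (Real.cos t • x + Real.sin t • k) (Real.cos t • x + Real.sin t • k),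
        Real.cos t • x + Real.sin t • k⟫ ≤ A := hmax hmem
    rw [hexp] at hle
    simpa using hle
  have := hloc.hasDerivAt_eq_zero hderiv
  linarith

/-- The Peirce space of a primitive idempotent for the eigenvalue `1` is one-dimensional. -/
theorem IsPrimitiveIdem.exists_eq_smul [FiniteDimensional ℝ V] {J : EJA V} {c : V}
    (hc : J.IsPrimitiveIdem c) {x : V} (hx : J.mul c x = x) : ∃ p : ℝ, x = p • c := by
  obtain ⟨hidem, hc0, hprim⟩ := hc
  have hcc : J.mul c c = c := hidem
  have hcpos : 0 < ⟪c, c⟫ := real_inner_self_pos.mpr hc0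
  let W : Submodule ℝ V :=
    LinearMap.ker (J.mul c - LinearMap.id) ⊓ LinearMap.ker (innerₗ V c)
  have memW : ∀ y, y ∈ W ↔ J.mul c y = y ∧ ⟪c, y⟫ = 0 := fun y => by
    simp [W, sub_eq_zero]
  by_cases hW : W = ⊥
  · refine ⟨⟪c, x⟫ / ⟪c, c⟫, sub_eq_zero.mp ?_⟩
    rw [← Submodule.mem_bot ℝ, ← hW, memW]
    constructor
    · rw [map_sub, map_smul, hx, hcc]
    · rw [inner_sub_right, real_inner_smul_right, div_mul_cancel₀ _ hcpos.ne', sub_self]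
  exfalso
  obtain ⟨y, hyW, hy1, hcrit⟩ := J.exists_cubic_critical W hW
  obtain ⟨hcy, hcy0⟩ := (memW y).mp hyW
  have hyy : ⟪y, y⟫ = 1 := by rw [real_inner_self_eq_norm_sq, hy1, one_pow]
  have hcy2 : J.mul c (J.mul y y) = J.mul y y := by
    rw [J.idem_mul_comm_of_even hidem (by rw [hcy, hcy]), hcy]
  obtain ⟨μ, hμ⟩ : ∃ μ, μ = ⟪J.mul y y, y⟫ := ⟨_, rfl⟩
  obtain ⟨ν, hν⟩ : ∃ ν, ν = ⟪c, c⟫⁻¹ := ⟨_, rfl⟩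
  have hνpos : 0 < ν := by rw [hν]; positivity
  have hquad : J.mul y y = μ • y + ν • c := by
    set d := J.mul y y - (μ • y + ν • c) with hd
    have hcd : ⟪c, d⟫ = 0 := by
      rw [hd, inner_sub_right, inner_add_right, real_inner_smul_right, real_inner_smul_right, hcy0,
        hν, inv_mul_cancel₀ hcpos.ne', real_inner_comm, J.inner_mul_comm, J.comm y c, hcy, hyy]
      simp
    have hyd : ⟪y, d⟫ = 0 := by
      rw [hd, inner_sub_right, inner_add_right, real_inner_smul_right, real_inner_smul_right,
        real_inner_comm c y, hcy0, hyy, real_inner_comm, hμ]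
      simp
    have hdW : d ∈ W := (memW d).mpr ⟨by
      rw [hd, map_sub, map_add, map_smul, map_smul, hcy2, hcy, hcc], hcd⟩
    have h1 := hcrit d hdW hyd
    have h2 : ⟪d, d⟫ = 0 := by
      nth_rewrite 1 [hd]
      rw [inner_sub_left, inner_add_left, real_inner_smul_left, real_inner_smul_left, h1, hyd, hcd]
      simp
    exact sub_eq_zero.mp (inner_self_eq_zero.mp h2)
  obtain ⟨D, hDpos, hD⟩ : ∃ D : ℝ, 0 < D ∧ D ^ 2 = μ ^ 2 + 4 * ν :=
    ⟨√(μ ^ 2 + 4 * ν), by positivity, Real.sq_sqrt (by positivity)⟩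
  have hyne : ∀ p : ℝ, y ≠ p • c := fun p hp => by
    have h1 := hcy0
    rw [hp, real_inner_smul_right] at h1
    have hp0 := (mul_eq_zero.mp h1).resolve_right hcpos.ne'
    rw [hp, hp0, zero_smul, norm_zero] at hy1
    exact zero_ne_one hy1
  have hD0 := hDpos.ne'
  obtain ⟨t, ht⟩ : ∃ t, t = (μ - D) / 2 := ⟨_, rfl⟩
  have hνt : ν = - t * (t + D) := by rw [ht]; linarith
  have hμt : μ = 2 * t + D := by rw [ht]; ring
  obtain ⟨e, he⟩ : ∃ e, e = D⁻¹ • (y - t • c) := ⟨_, rfl⟩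
  have hce : J.mul c e = e := by
    rw [he, map_smul, map_sub, map_smul, hcy, hcc]
  have hee : J.mul e e = e := by
    rw [he]
    simp only [map_smul, map_sub, LinearMap.smul_apply, LinearMap.sub_apply, hquad, hcc, hcy,
      J.comm y c, hνt, hμt]
    match_scalars <;> field_simp <;> ring
  rcases hprim e (c - e) hee
    (by rw [EJA.IsIdem, map_sub, LinearMap.map_sub₂, LinearMap.map_sub₂, hcc, hce, J.comm e c, hce,
          hee]; abel)
    (by rw [map_sub, J.comm e c, hce, hee, sub_self]) (by abel) with h | h
  · refine hyne t (sub_eq_zero.mp ?_)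
    rw [he] at h
    exact (smul_eq_zero.mp h).resolve_left (inv_ne_zero hD0)
  · refine hyne (t + D) ?_
    have h' : D • c = y - t • c := by
      have h2 : D⁻¹ • (y - t • c) = c := ((sub_eq_zero.mp h).trans he).symm
      exact ((inv_smul_eq_iff₀ hD0).mp h2).symm
    rw [add_smul, h']
    abel

/-- The square of a nonzero element of an off-diagonal Peirce space of two orthogonal primitive
idempotents is a positive multiple of their sum. -/
theorem exists_sq_eq_smul_add [FiniteDimensional ℝ V] {e f u : V} (he : J.IsPrimitiveIdem e)
    (hf : J.IsPrimitiveIdem f) (hef : J.mul e f = 0) (heu : J.mul e u = (1 / 2 : ℝ) • u)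
    (hfu : J.mul f u = (1 / 2 : ℝ) • u) (hu : u ≠ 0) :
    ∃ p : ℝ, 0 < p ∧ J.mul u u = p • (e + f) := by
  have hee : J.mul e e = e := he.1
  have hff : J.mul f f = f := hf.1
  have hfe : J.mul f e = 0 := by rw [J.comm, hef]
  obtain ⟨p, hp⟩ := he.exists_eq_smul (J.half_sq_even he.1 heu)
  obtain ⟨q, hq⟩ := hf.exists_eq_smul (J.half_sq_even hf.1 hfu)
  have hd : J.IsIdem (e + f) := by
    simp only [EJA.IsIdem, map_add, LinearMap.add_apply, hee, hff, hef, hfe]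
    abel
  have hdu : J.mul (e + f) u = u := by
    rw [map_add, LinearMap.add_apply, heu, hfu]
    module
  have huu : J.mul u u = p • e + q • f := by
    have := J.idem_mul_comm_of_even hd (x := u) (by rw [hdu, hdu]) u
    rw [hdu, map_add, LinearMap.add_apply, hp, hq] at this
    exact this.symm
  have heepos : 0 < ⟪e, e⟫ := real_inner_self_pos.mpr he.2.1
  have hupos : 0 < ⟪u, u⟫ := real_inner_self_pos.mpr hu
  have hef0 : ⟪f, e⟫ = 0 := by rw [← hee, real_inner_comm, J.inner_mul_comm, hef, inner_zero_right]
  have hnorm : p * ⟪e, e⟫ = 1 / 2 * ⟪u, u⟫ := by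
    have h1 : ⟪J.mul u u, e⟫ = 1 / 2 * ⟪u, u⟫ := by
      rw [J.inner_mul_comm, J.comm, heu, real_inner_smul_right]
    rw [← h1, huu, inner_add_left, real_inner_smul_left, real_inner_smul_left, hef0]
    ring
  have hppos : 0 < p := by
    by_contra hneg
    nlinarith
  have hpow := J.jordan u u
  have hpow2 : ((p + q) / 2) • (p • e + q • f) = (p * p) • e + (q * q) • f := by
    rw [huu] at hpow
    simp only [map_add, map_smul, LinearMap.add_apply, LinearMap.smul_apply, heu, hfu, huu,
      hee, hff, hef, hfe] at hpow
    linear_combination (norm := module) hpow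
  have hpq : (p + q) / 2 * p = p * p := by
    have := congrArg (fun z => ⟪z, e⟫) hpow2
    simp only [inner_add_left, real_inner_smul_left, hef0] at this
    refine mul_right_cancel₀ heepos.ne' ?_
    linarith
  have hqp : q = p := by
    have := mul_right_cancel₀ hppos.ne' hpq
    linarith
  exact ⟨p, hppos, by rw [huu, hqp, smul_add]⟩

end Primitive

section Frame

variable {J : EJA V}

theorem mul_mul_half {e f : V} (he : J.IsIdem e) (hef : J.mul e f = 0) (x : V) :
    J.mul e (J.mul e (J.mul f x)) = (1 / 2 : ℝ) • J.mul e (J.mul f x) := by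
  have comm := J.idem_mul_comm_of_even he (x := f) (by rw [hef, map_zero])
  have hy : J.mul e ((2 : ℝ) • J.mul e (J.mul e x) - J.mul e x) =
      (2 : ℝ) • J.mul e (J.mul e x) - J.mul e x := by
    have := J.peirce_cubic he x
    rw [map_sub, map_smul]
    linear_combination (norm := module) this
  have h0 := J.one_mul_zero he hy hef
  rw [J.comm, map_sub, map_smul] at h0
  rw [comm, comm]
  linear_combination (norm := module) (1 / 2 : ℝ) • h0

theorem IsJordanFrame.mul_mul_half_right {r : ℕ} {c : Fin r → V} (hc : J.IsJordanFrame c)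
    {i j : Fin r} (hij : i ≠ j) (x : V) :
    J.mul (c j) (J.mul (c i) (J.mul (c j) x)) = (1 / 2 : ℝ) • J.mul (c i) (J.mul (c j) x) := by
  have h := J.idem_mul_comm_of_even (hc.1 i).1 (x := c j)
    (by rw [hc.2.1 i j hij, map_zero]) x
  rw [h]
  exact mul_mul_half (hc.1 j).1 (hc.2.1 j i hij.symm) x

/-- In a simple algebra, the Peirce decomposition of a Jordan frame is connected. -/
theorem IsJordanFrame.exists_offDiagonal (hsimple : J.IsSimple) {r : ℕ} {c : Fin r → V}
    (hc : J.IsJordanFrame c) (S : Finset (Fin r)) {k l : Fin r} (hk : k ∈ S) (hl : l ∉ S) :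
    ∃ i ∈ S, ∃ j, j ∉ S ∧ ∃ u : V, u ≠ 0 ∧ J.mul (c i) u = (1 / 2 : ℝ) • u ∧
      J.mul (c j) u = (1 / 2 : ℝ) • u := by
  by_contra hno
  push Not at hno
  have hzero : ∀ i ∈ S, ∀ j ∉ S, ∀ x, J.mul (c i) (J.mul (c j) x) = 0 := by
    intro i hi j hj x
    have hij : i ≠ j := fun h => hj (h ▸ hi)
    by_contra h0
    exact hno i hi j hj _ h0 (mul_mul_half (hc.1 i).1 (hc.2.1 i j hij) x)
      (hc.mul_mul_half_right hij x)
  obtain ⟨e, he⟩ : ∃ e, e = ∑ i ∈ S, c i := ⟨_, rfl⟩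
  have hin : ∀ i ∈ S, J.mul e (c i) = c i := by
    intro i hi
    rw [he, map_sum, LinearMap.sum_apply, Finset.sum_eq_single_of_mem i hi]
    · exact (hc.1 i).1
    · exact fun j _ hji => hc.2.1 j i hji
  have hout : ∀ j ∉ S, J.mul e (c j) = 0 := by
    intro j hj
    rw [he, map_sum, LinearMap.sum_apply]
    exact Finset.sum_eq_zero fun i hi => hc.2.1 i j fun h => hj (h ▸ hi)
  have hidem : J.IsIdem e := by
    rw [EJA.IsIdem]
    nth_rewrite 2 [he]
    rw [map_sum, Finset.sum_congr rfl hin, he]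
  have hone : J.one = e + ∑ j ∈ Sᶜ, c j := by
    rw [he, ← hc.2.2, Finset.sum_add_sum_compl]
  have heven : ∀ x, J.mul e (J.mul e x) = J.mul e x := by
    intro x
    have h1 : J.mul e (J.mul (∑ j ∈ Sᶜ, c j) x) = 0 := by
      simp only [he, map_sum, LinearMap.sum_apply]
      exact Finset.sum_eq_zero fun j hj => Finset.sum_eq_zero fun i hi =>
        hzero i hi j (by simpa using hj) x
    have h2 := congrArg (J.mul e) (J.one_mul x)
    rw [hone, map_add, LinearMap.add_apply, map_add, h1, add_zero] at h2
    exact h2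
  have hideal : J.IsIdeal (LinearMap.ker (J.mul e - LinearMap.id)) := by
    intro x hx y
    have hx : J.mul e x = x := by simpa [sub_eq_zero] using hx
    have h1 := J.one_mul_zero hidem hx (y := y - J.mul e y) (by rw [map_sub, heven, sub_self])
    have h2 := J.idem_mul_comm_of_even hidem (heven x) y
    rw [map_sub, sub_eq_zero] at h1
    rw [LinearMap.mem_ker, LinearMap.sub_apply, h2, ← h1, LinearMap.id_apply, sub_self]
  rcases hsimple.2 _ hideal with h | h
  · have : c k ∈ LinearMap.ker (J.mul e - LinearMap.id) := by simp [hin k hk]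
    rw [h, Submodule.mem_bot] at this
    exact (hc.1 k).2.1 this
  · have : c l ∈ LinearMap.ker (J.mul e - LinearMap.id) := by rw [h]; trivial
    simp only [LinearMap.mem_ker, LinearMap.sub_apply, hout l hl, LinearMap.id_apply, zero_sub,
      neg_eq_zero] at this
    exact (hc.1 l).2.1 this

variable {a : V}

theorem inner_mul_inner_nonpos
    (ha : ∀ x ∈ J.coneOfSquares, x - ⟪a, x⟫ • a ∈ J.coneOfSquares) {e f : V} (he : J.IsIdem e)
    (hf : J.IsIdem f) (hef : ⟪e, f⟫ = 0) : ⟪a, e⟫ * ⟪a, f⟫ ≤ 0 := by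
  obtain ⟨y, hy⟩ := ha e ⟨e, he.symm⟩
  have h1 : 0 ≤ ⟪J.mul y y, f⟫ := by
    rw [J.inner_mul_self, J.comm, real_inner_comm]
    exact J.inner_mul_idem_nonneg hf y
  rw [← hy, inner_sub_left, real_inner_smul_left, hef] at h1
  linarith

theorem inner_eq_zero_of_mul_eq_zero {e f : V} (he : J.IsIdem e) (hef : J.mul e f = 0) :
    ⟪e, f⟫ = 0 := by
  have hee : J.mul e e = e := he
  rw [← hee, J.inner_mul_comm, hef, inner_zero_right]

theorem exists_normalized [FiniteDimensional ℝ V] {e f u : V} (he : J.IsPrimitiveIdem e)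
    (hf : J.IsPrimitiveIdem f) (hef : J.mul e f = 0) (heu : J.mul e u = (1 / 2 : ℝ) • u)
    (hfu : J.mul f u = (1 / 2 : ℝ) • u) (hu : u ≠ 0) :
    ∃ k : ℝ, k ≠ 0 ∧ J.mul (k • u) (k • u) = e + f := by
  obtain ⟨p, hp, huu⟩ := J.exists_sq_eq_smul_add he hf hef heu hfu hu
  have hs : √p ^ 2 = p := Real.sq_sqrt hp.le
  have hs0 : √p ≠ 0 := (Real.sqrt_pos.mpr hp).ne'
  refine ⟨(√p)⁻¹, inv_ne_zero hs0, ?_⟩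
  rw [map_smul, LinearMap.map_smul₂, huu, smul_smul, smul_smul]
  nth_rewrite 3 [← hs]
  rw [show (√p)⁻¹ * (√p)⁻¹ * √p ^ 2 = 1 by field_simp, one_smul]

theorem inner_add_inner_eq_zero [FiniteDimensional ℝ V]
    (ha : ∀ x ∈ J.coneOfSquares, x - ⟪a, x⟫ • a ∈ J.coneOfSquares) {e f u : V}
    (he : J.IsPrimitiveIdem e) (hf : J.IsPrimitiveIdem f) (hef : J.mul e f = 0)
    (heu : J.mul e u = (1 / 2 : ℝ) • u) (hfu : J.mul f u = (1 / 2 : ℝ) • u) (hu : u ≠ 0) :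
    ⟪a, e⟫ + ⟪a, f⟫ = 0 := by
  have hee : J.mul e e = e := he.1
  have hff : J.mul f f = f := hf.1
  have hfe : J.mul f e = 0 := by rw [J.comm, hef]
  obtain ⟨k, hk, huu⟩ := exists_normalized he hf hef heu hfu hu
  set v := k • u with hv
  have hev : J.mul e v = (1 / 2 : ℝ) • v := by rw [hv, map_smul, heu, smul_comm]
  have hfv : J.mul f v = (1 / 2 : ℝ) • v := by rw [hv, map_smul, hfu, smul_comm]
  obtain ⟨C, S, hCS, horth⟩ : ∃ C S : ℝ, C ^ 2 + S ^ 2 = 1 ∧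
      C * (⟪a, e⟫ - ⟪a, f⟫) + S * ⟪a, v⟫ = 0 := by
    set δ := ⟪a, e⟫ - ⟪a, f⟫
    set β := ⟪a, v⟫
    by_cases h0 : δ ^ 2 + β ^ 2 = 0
    · have hδ : δ = 0 := by nlinarith [sq_nonneg δ, sq_nonneg β]
      exact ⟨1, 0, by norm_num, by rw [hδ]; ring⟩
    · have hpos : 0 < δ ^ 2 + β ^ 2 := lt_of_le_of_ne (by positivity) (Ne.symm h0)
      have hs : √(δ ^ 2 + β ^ 2) ^ 2 = δ ^ 2 + β ^ 2 := Real.sq_sqrt hpos.le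
      have hs0 : √(δ ^ 2 + β ^ 2) ≠ 0 := (Real.sqrt_pos.mpr hpos).ne'
      refine ⟨β / √(δ ^ 2 + β ^ 2), -δ / √(δ ^ 2 + β ^ 2), ?_, by ring⟩
      rw [div_pow, div_pow, hs]
      field_simp
      ring
  obtain ⟨h, hh⟩ : ∃ h, h = C • (e - f) + S • v := ⟨_, rfl⟩
  have hah : ⟪a, h⟫ = 0 := by
    rw [hh, inner_add_right, real_inner_smul_right, inner_sub_right, real_inner_smul_right, horth]
  have hsq : J.mul h h = e + f := by
    have hC : C ^ 2 = 1 - S ^ 2 := by linarith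
    rw [hh]
    simp only [map_add, map_sub, map_smul, LinearMap.add_apply, LinearMap.sub_apply,
      LinearMap.smul_apply, hee, hff, hef, hfe, J.comm v e, J.comm v f, hev, hfv, huu]
    match_scalars <;> linarith
  have hdh : J.mul (e + f) h = h := by
    rw [hh]
    simp only [map_add, map_sub, map_smul, LinearMap.add_apply, hee, hff, hef, hfe, hev, hfv]
    module
  have hdd : J.mul (e + f) (e + f) = e + f := by
    simp only [map_add, LinearMap.add_apply, hee, hff, hef, hfe]
    abel
  obtain ⟨d, hd⟩ : ∃ d, d = e + f := ⟨_, rfl⟩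
  have hidem : ∀ s : ℝ, s ^ 2 = 1 → J.IsIdem ((1 / 2 : ℝ) • (d + s • h)) := by
    intro s hs
    simp only [EJA.IsIdem, map_add, map_smul, LinearMap.add_apply, LinearMap.smul_apply]
    rw [J.comm h d, hd, hdd, hdh, hsq]
    match_scalars <;> linarith
  have hinner : ⟪h, h⟫ = ⟪d, d⟫ := by
    nth_rewrite 1 [← hdh]
    rw [J.inner_mul_comm, hsq, hd]
  have := inner_mul_inner_nonpos ha (hidem 1 (by norm_num)) (hidem (-1) (by norm_num)) (by
    simp only [inner_add_left, inner_add_right, real_inner_smul_left, real_inner_smul_right,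
      real_inner_comm h d, hinner]
    ring)
  simp only [real_inner_smul_right, inner_add_right, hah] at this
  rw [← inner_add_right, ← hd]
  nlinarith

theorem IsJordanFrame.inner_eq_zero [FiniteDimensional ℝ V] (hsimple : J.IsSimple)
    (ha : ∀ x ∈ J.coneOfSquares, x - ⟪a, x⟫ • a ∈ J.coneOfSquares) {r : ℕ} (hr : 3 ≤ r)
    {c : Fin r → V} (hc : J.IsJordanFrame c) (k : Fin r) : ⟪a, c k⟫ = 0 := by
  by_contra hk
  by_cases hall : ∃ l, ⟪a, c l⟫ = 0
  · obtain ⟨l, hl⟩ := hall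
    obtain ⟨i, hi, j, hj, u, hu, hiu, hju⟩ := hc.exists_offDiagonal hsimple
      (Finset.univ.filter fun i => ⟪a, c i⟫ ≠ 0) (k := k) (l := l) (by simpa using hk)
      (by simpa using hl)
    have hij : i ≠ j := fun h => hj (h ▸ hi)
    have hi : ⟪a, c i⟫ ≠ 0 := by simpa using hi
    have hj : ⟪a, c j⟫ = 0 := by simpa using hj
    have := inner_add_inner_eq_zero ha (hc.1 i) (hc.1 j) (hc.2.1 i j hij) hiu hju hu
    rw [hj, add_zero] at this
    exact hi this
  · push Not at hall
    have hneg : ∀ i j, i ≠ j → ⟪a, c i⟫ * ⟪a, c j⟫ < 0 := fun i j hij =>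
      lt_of_le_of_ne (inner_mul_inner_nonpos ha (hc.1 i).1 (hc.1 j).1
        (inner_eq_zero_of_mul_eq_zero (hc.1 i).1 (hc.2.1 i j hij)))
        (mul_ne_zero (hall i) (hall j))
    have h01 := hneg ⟨0, by omega⟩ ⟨1, by omega⟩ (by simp)
    have h12 := hneg ⟨1, by omega⟩ ⟨2, by omega⟩ (by simp)
    have h02 := hneg ⟨0, by omega⟩ ⟨2, by omega⟩ (by simp)
    nlinarith [mul_pos_of_neg_of_neg h01 h12, sq_nonneg ⟪a, c ⟨1, by omega⟩⟫]

/-- Reflecting the frame extends the vanishing of `⟪a, ·⟫` to the off-diagonal Peirce spaces. -/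
theorem IsJordanFrame.inner_offDiagonal_eq_zero [FiniteDimensional ℝ V] (hsimple : J.IsSimple)
    (ha : ∀ x ∈ J.coneOfSquares, x - ⟪a, x⟫ • a ∈ J.coneOfSquares) {r : ℕ} (hr : 3 ≤ r)
    {c : Fin r → V} (hc : J.IsJordanFrame c) {i j : Fin r} (hij : i ≠ j) {u : V}
    (hiu : J.mul (c i) u = (1 / 2 : ℝ) • u) (hju : J.mul (c j) u = (1 / 2 : ℝ) • u) :
    ⟪a, u⟫ = 0 := by
  by_cases hu : u = 0
  · rw [hu, inner_zero_right]
  have hee : J.mul (c i) (c i) = c i := (hc.1 i).1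
  have hff : J.mul (c j) (c j) = c j := (hc.1 j).1
  have hef := hc.2.1 i j hij
  have hfe := hc.2.1 j i hij.symm
  obtain ⟨k, hk, huu⟩ := exists_normalized (hc.1 i) (hc.1 j) hef hiu hju hu
  set v := k • u with hv
  have hev : J.mul (c i) v = (1 / 2 : ℝ) • v := by rw [hv, map_smul, hiu, smul_comm]
  have hfv : J.mul (c j) v = (1 / 2 : ℝ) • v := by rw [hv, map_smul, hju, smul_comm]
  obtain ⟨g, hg⟩ : ∃ g, g = (4 / 5 : ℝ) • c i + (1 / 5 : ℝ) • c j + (2 / 5 : ℝ) • v := ⟨_, rfl⟩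
  have hidem : J.IsIdem g := by
    rw [EJA.IsIdem, hg]
    simp only [map_add, map_smul, LinearMap.add_apply, LinearMap.smul_apply, hee, hff, hef, hfe,
      J.comm v (c i), J.comm v (c j), hev, hfv, huu]
    module
  have h1 := (hc.peirceReflection hidem).inner_eq_zero hsimple ha hr i
  have h2 : J.peirceReflection g (c i) =
      (9 / 25 : ℝ) • c i + (16 / 25 : ℝ) • c j + (12 / 25 : ℝ) • v := by
    rw [peirceReflection_apply, halfPart_apply, hg]
    simp only [map_add, map_smul, LinearMap.add_apply, LinearMap.smul_apply, hee, hfe,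
      J.comm v (c i), hev, hfv, huu, map_zero]
    module
  simp only [h2, hv, inner_add_right, real_inner_smul_right, hc.inner_eq_zero hsimple ha hr] at h1
  simpa [hk] using h1

end Frame

end EJA

/-- A simple Euclidean Jordan algebra of rank `r ≥ 3` contains no lattice-like
hyperplane: there is no unit vector `a` such that the orthogonal projection
`x ↦ x - ⟨a,x⟩ a` onto the hyperplane through the origin with normal `a` maps
the cone of squares `Q` into itself. -/
theorem no_latticeLike_hyperplane_of_rank_ge_three
    {V : Type*} [NormedAddCommGroup V] [InnerProductSpace ℝ V]
    [FiniteDimensional ℝ V] (J : EJA V) (hsimple : J.IsSimple)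
    {r : ℕ} (c : Fin r → V) (hc : J.IsJordanFrame c) (hr : 3 ≤ r) :
    ∀ a : V, ‖a‖ = 1 →
      ¬ (∀ x ∈ J.coneOfSquares, x - ⟪a, x⟫ • a ∈ J.coneOfSquares) := by
  intro a hnorm ha
  have hoff : ∀ i j, i ≠ j → ⟪a, J.mul (c i) (J.mul (c j) a)⟫ = 0 := fun i j hij =>
    hc.inner_offDiagonal_eq_zero hsimple ha hr hij
      (EJA.mul_mul_half (hc.1 i).1 (hc.2.1 i j hij) a) (hc.mul_mul_half_right hij a)
  have hdiag : ∀ i, ⟪a, J.mul (c i) a⟫ = 0 := by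
    intro i
    have h1 : ⟪a, J.mul (c i) a⟫ = ⟪a, J.mul (c i) (J.mul (c i) a)⟫ := by
      nth_rewrite 2 [← J.one_mul a]
      rw [← hc.2.2, map_sum, LinearMap.sum_apply, map_sum, inner_sum,
        Finset.sum_eq_single_of_mem i (Finset.mem_univ i)]
      exact fun j _ hji => hoff i j hji.symm
    obtain ⟨p, hp⟩ := (hc.1 i).exists_eq_smul
      (x := (2 : ℝ) • J.mul (c i) (J.mul (c i) a) - J.mul (c i) a) (by
        have := J.peirce_cubic (hc.1 i).1 a
        rw [map_sub, map_smul]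
        linear_combination (norm := module) this)
    have h2 := congrArg (fun z => ⟪a, z⟫) hp
    simp only [inner_sub_right, real_inner_smul_right, hc.inner_eq_zero hsimple ha hr] at h2
    linarith
  have h0 : ⟪a, a⟫ = 0 := by
    nth_rewrite 2 [← J.one_mul a]
    rw [← hc.2.2, map_sum, LinearMap.sum_apply, inner_sum]
    exact Finset.sum_eq_zero fun i _ => hdiag i
  rw [real_inner_self_eq_norm_sq, hnorm] at h0
  norm_num at h0
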